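/- Let γ ∈ (0,2), T > 0 and β > 0. Let G ∈ S_Neu if γ ∈ (0,1], and G ∈ S_Rob with G₋(t,0) = G₊(t,0) for all t ∈ [0,T] if γ ∈ (1,2). Then lim_{n→∞} (1/n) ∑_{x∈ℤ} sup_{s∈[0,T]} | n^{γ−β} ∑_{y : {x,y}∈S₀} (G(s, y/n) − G(s, x/n)) p(y−x) | = 0. -/

import Mathlib

open MeasureTheory Filter Set Topology

/-- Transition probability `p(z) = c⋅|z|^{-γ-1}` for `z ≠ 0`, `p(0)=0`. -/
noncomputable def transP (c γ : ℝ) (z : ℤ) : ℝ :=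
  if z = 0 then 0 else c * |(z : ℝ)| ^ (-γ - 1)

/-- `G ∈ S_Dif = P([0,T], C_c^∞(ℝ))`. -/
def SDifMem (G : ℝ → ℝ → ℝ) : Prop :=
  ∃ (k : ℕ) (a : ℕ → ℝ → ℝ),
    (∀ j : ℕ, ContDiff ℝ (⊤ : ℕ∞) (a j) ∧ HasCompactSupport (a j)) ∧
    ∀ t u : ℝ, G t u = ∑ j ∈ Finset.range (k + 1), a j u * t ^ j

/-- `G ∈ S_Rob`. -/
def SRobMem (G : ℝ → ℝ → ℝ) : Prop :=
  ∃ Gm Gp : ℝ → ℝ → ℝ, SDifMem Gm ∧ SDifMem Gp ∧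
    ∀ t u : ℝ, G t u = if u < 0 then Gm t u else Gp t u

/-- `G ∈ S_Neu`. -/
def SNeuMem (G : ℝ → ℝ → ℝ) : Prop :=
  ∃ (k : ℕ) (a : ℕ → ℝ → ℝ) (b : ℝ), 0 < b ∧
    (∀ j : ℕ, ContDiff ℝ (⊤ : ℕ∞) (a j) ∧ HasCompactSupport (a j) ∧
      ∀ u : ℝ, |u| ≤ b → a j u = 0) ∧
    ∀ t u : ℝ, G t u = ∑ j ∈ Finset.range (k + 1), a j u * t ^ j

/-!
The bonds of `S₀` satisfy `|y - x| = |x + 1/2| + |y + 1/2|`, so a kernel `|y - x| ^ (-(p + q))` is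
at most `|x + 1/2| ^ (-p) * |y + 1/2| ^ (-q)`, and the double sum over `S₀` splits into convergent
factors as soon as `p` and `q` can both be taken equal to `1 + η` with `η > 0`. Hölder continuity of
`G` with exponent `δ ∈ [0, 1]` leaves the kernel `|y - x| ^ (δ - γ - 1)`, so that for large `γ` the
choice `δ = γ - 1 - 2η` works. When `γ` is small this kernel decays too slowly even for `δ = 0`, and
the bounded support of `G` compensates: a bond contributes only if one of its endpoints lies in
`[-Rn, Rn]`, which provides, up to a constant, the additional factor `(n / |x + 1/2|) ^ ε` (or the
same with `y`), where `ε = 1 + 2η - γ`. In both regimes the total power of `n` is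
`-1 + (γ - β) + (ε - δ) = 2η - β`, which is negative for `η` small.
-/

open scoped NNReal

/-- The bond `{x, y}` belongs to `S₀`, that is, it joins the negative integers to the nonnegative
ones. -/
abbrev CrossesOrigin (x y : ℤ) : Prop :=
  (x < 0 ∧ 0 ≤ y) ∨ (y < 0 ∧ 0 ≤ x)

/-- The sum `∑_{y : {x,y} ∈ S₀} (g(y/n) - g(x/n)) p(y-x)`: the part of the discrete generator at
scale `n` that comes from the bonds of `S₀`. -/
noncomputable def crossingSum (c γ : ℝ) (g : ℝ → ℝ) (n : ℕ) (x : ℤ) : ℝ :=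
  ∑' y : ℤ, if CrossesOrigin x y then
    (g ((y : ℝ) / n) - g ((x : ℝ) / n)) * transP c γ (y - x) else 0

/-- The functions `G s`, `s ∈ I`, share a Lipschitz constant and a bounded set outside of which they
vanish. This is what the limit theorem requires of a time-dependent test function. -/
structure EquiLipschitzCompactSupport {ι : Type*} (I : Set ι) (G : ι → ℝ → ℝ) : Prop where
  exists_lipschitzWith : ∃ K : ℝ≥0, ∀ s ∈ I, LipschitzWith K (G s)
  exists_eq_zero : ∃ R : ℝ≥0, ∀ s ∈ I, ∀ u : ℝ, R ≤ |u| → G s u = 0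

theorem lipschitzWith_ite_lt {E : Type*} [SeminormedAddCommGroup E] {f g : ℝ → E} {K L : ℝ≥0}
    {a : ℝ} (hf : LipschitzWith K f) (hg : LipschitzWith L g) (hfg : f a = g a) :
    LipschitzWith (K + L) fun u => if u < a then f u else g u := by
  -- Both branches are the single formula `f (min u a) + g (max u a) - g a`.
  have h := ((hf.comp (LipschitzWith.id.min_const a)).add
    (hg.comp (LipschitzWith.id.max_const a))).sub (LipschitzWith.const (g a))
  rw [mul_one, mul_one, add_zero] at h
  convert! h using 2 with u
  split_ifs with hu
  · simp [hu.le]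
  · simp [not_lt.mp hu, hfg]

namespace EquiLipschitzCompactSupport

variable {ι : Type*} {I : Set ι} {F G : ι → ℝ → ℝ}

protected theorem zero : EquiLipschitzCompactSupport I fun _ _ => 0 :=
  ⟨⟨0, fun _ _ => LipschitzWith.const 0⟩, ⟨0, fun _ _ _ _ => rfl⟩⟩

protected theorem add (hF : EquiLipschitzCompactSupport I F)
    (hG : EquiLipschitzCompactSupport I G) :
    EquiLipschitzCompactSupport I fun s u => F s u + G s u := by
  obtain ⟨⟨K, hK⟩, R, hR⟩ := hF
  obtain ⟨⟨L, hL⟩, S, hS⟩ := hG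
  refine ⟨⟨K + L, fun s hs => (hK s hs).add (hL s hs)⟩, max R S, fun s hs u hu => ?_⟩
  obtain ⟨hRu, hSu⟩ : R ≤ |u| ∧ S ≤ |u| := by simpa using hu
  rw [hR s hs u hRu, hS s hs u hSu, add_zero]

protected theorem sum {κ : Type*} (J : Finset κ) {H : κ → ι → ℝ → ℝ}
    (hH : ∀ j ∈ J, EquiLipschitzCompactSupport I (H j)) :
    EquiLipschitzCompactSupport I fun s u => ∑ j ∈ J, H j s u := by
  classical
  induction J using Finset.induction_on with
  | empty => simpa using EquiLipschitzCompactSupport.zero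
  | insert j J hj ih =>
    simp only [Finset.sum_insert hj]
    exact (hH j (Finset.mem_insert_self j J)).add
      (ih fun i hi => hH i (Finset.mem_insert_of_mem hi))

theorem mul_of_norm_le {a : ℝ → ℝ} {φ : ι → ℝ} {K : ℝ≥0} {C : ℝ} (ha : LipschitzWith K a)
    (ha' : HasCompactSupport a) (hφ : ∀ s ∈ I, ‖φ s‖ ≤ C) :
    EquiLipschitzCompactSupport I fun s u => a u * φ s := by
  obtain ⟨R, hR0, hR⟩ := ha'.exists_pos_le_norm
  refine ⟨⟨K * C.toNNReal, fun s hs => LipschitzWith.of_dist_le_mul fun u v => ?_⟩,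
    R.toNNReal, fun s _ u hu => ?_⟩
  · rw [dist_eq_norm, ← sub_mul, norm_mul, NNReal.coe_mul, mul_right_comm]
    gcongr
    · simpa only [dist_eq_norm] using ha.dist_le_mul u v
    · exact (hφ s hs).trans (Real.le_coe_toNNReal C)
  · rw [hR u (by simpa [hR0.le] using hu), zero_mul]

protected theorem ite_lt {a : ℝ} (hF : EquiLipschitzCompactSupport I F)
    (hG : EquiLipschitzCompactSupport I G) (h : ∀ s ∈ I, F s a = G s a) :
    EquiLipschitzCompactSupport I fun s u => if u < a then F s u else G s u := by
  obtain ⟨⟨K, hK⟩, R, hR⟩ := hF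
  obtain ⟨⟨L, hL⟩, S, hS⟩ := hG
  refine ⟨⟨K + L, fun s hs => lipschitzWith_ite_lt (hK s hs) (hL s hs) (h s hs)⟩,
    max R S, fun s hs u hu => ?_⟩
  obtain ⟨hRu, hSu⟩ : R ≤ |u| ∧ S ≤ |u| := by simpa using hu
  rw [hR s hs u hRu, hS s hs u hSu, ite_self]

protected theorem continuous (hG : EquiLipschitzCompactSupport I G) {s : ι} (hs : s ∈ I) :
    Continuous (G s) :=
  let ⟨_, hK⟩ := hG.exists_lipschitzWith
  (hK s hs).continuous

end EquiLipschitzCompactSupport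

theorem SDifMem.equiLipschitzCompactSupport {G : ℝ → ℝ → ℝ} (hG : SDifMem G) {I : Set ℝ}
    (hI : Bornology.IsBounded I) : EquiLipschitzCompactSupport I G := by
  obtain ⟨k, a, ha, hGa⟩ := hG
  obtain ⟨B, -, hB⟩ := hI.exists_pos_norm_le
  obtain rfl : G = fun t u => ∑ j ∈ Finset.range (k + 1), a j u * t ^ j := by
    ext t u
    exact hGa t u
  refine .sum _ fun j _ => ?_
  obtain ⟨K, hK⟩ := (ha j).1.lipschitzWith_of_hasCompactSupport (ha j).2 (by simp)
  refine .mul_of_norm_le (C := B ^ j) hK (ha j).2 fun t ht => ?_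
  rw [norm_pow]
  gcongr
  exact hB t ht

theorem SNeuMem.sDifMem {G : ℝ → ℝ → ℝ} (hG : SNeuMem G) : SDifMem G :=
  let ⟨k, a, _, _, ha, hGa⟩ := hG
  ⟨k, a, fun j => ⟨(ha j).1, (ha j).2.1⟩, hGa⟩

theorem SRobMem.equiLipschitzCompactSupport {G : ℝ → ℝ → ℝ} (hG : SRobMem G) {I : Set ℝ}
    (hI : Bornology.IsBounded I)
    (hcont : ∀ t ∈ I, Tendsto (fun u => G t u) (𝓝[<] (0 : ℝ)) (𝓝 (G t 0))) :
    EquiLipschitzCompactSupport I G := by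
  obtain ⟨Gm, Gp, hm, hp, hGe⟩ := hG
  obtain rfl : G = fun t u => if u < 0 then Gm t u else Gp t u := by
    ext t u
    exact hGe t u
  have hm' := hm.equiLipschitzCompactSupport hI
  refine hm'.ite_lt (hp.equiLipschitzCompactSupport hI) fun t ht => ?_
  have hGm : Tendsto (fun u => if u < 0 then Gm t u else Gp t u) (𝓝[<] (0 : ℝ))
      (𝓝 (Gm t 0)) := by
    refine (((hm'.continuous ht).tendsto 0).mono_left nhdsWithin_le_nhds).congr' ?_
    filter_upwards [self_mem_nhdsWithin] with u hu
    rw [if_pos (Set.mem_Iio.mp hu)]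
  simpa using tendsto_nhds_unique hGm (hcont t ht)

theorem holderWith_zero_of_norm_le {X E : Type*} [PseudoMetricSpace X] [SeminormedAddCommGroup E]
    {f : X → E} {C : ℝ≥0} (hf : ∀ x, ‖f x‖ ≤ C) : HolderWith (C + C) 0 f := fun x y => by
  have h : nndist (f x) (f y) ≤ C + C :=
    (dist_le_norm_add_norm _ _).trans (add_le_add (hf x) (hf y))
  rw [NNReal.coe_zero, ENNReal.rpow_zero, mul_one, edist_nndist]
  exact ENNReal.coe_le_coe.mpr h

theorem norm_le_of_lipschitzWith_of_eq_zero {E : Type*} [SeminormedAddCommGroup E] {g : ℝ → E}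
    {K R : ℝ≥0} (hg : LipschitzWith K g) (hR : ∀ u : ℝ, R ≤ |u| → g u = 0) (u : ℝ) :
    ‖g u‖ ≤ (K * (R + R) : ℝ≥0) := by
  rcases le_total (R : ℝ) |u| with hu | hu
  · rw [hR u hu, norm_zero]
    positivity
  · have hgR : g R = 0 := hR R (le_abs_self _)
    calc ‖g u‖ = dist (g u) (g R) := by rw [hgR, dist_zero_right]
      _ ≤ K * dist u R := hg.dist_le_mul u R
      _ ≤ K * (R + R) := by
        gcongr
        rw [Real.dist_eq]
        exact (abs_sub _ _).trans (add_le_add hu (NNReal.abs_eq R).le)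

theorem holderWith_of_lipschitzWith_of_eq_zero {E : Type*} [SeminormedAddCommGroup E] {g : ℝ → E}
    {K R δ : ℝ≥0} (hg : LipschitzWith K g) (hR : ∀ u : ℝ, R ≤ |u| → g u = 0) (hδ : δ ≤ 1) :
    HolderWith (max (K * (R + R) + K * (R + R)) K) δ g :=
  (holderWith_zero_of_norm_le (norm_le_of_lipschitzWith_of_eq_zero hg hR)).of_le_of_le
    (holderWith_one.mpr hg) zero_le hδ

theorem CrossesOrigin.abs_add_half_add_abs_add_half {x y : ℤ} (h : CrossesOrigin x y) :
    |(x : ℝ) + 1 / 2| + |(y : ℝ) + 1 / 2| = |(y : ℝ) - x| := by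
  have key : ∀ {a b : ℤ}, a < 0 → 0 ≤ b →
      |(a : ℝ) + 1 / 2| + |(b : ℝ) + 1 / 2| = |(b : ℝ) - a| := fun {a b} ha hb => by
    have ha' : (a : ℝ) ≤ -1 := by exact_mod_cast Int.le_sub_one_of_lt ha
    have hb' : (0 : ℝ) ≤ b := by exact_mod_cast hb
    rw [abs_of_nonpos (by linarith), abs_of_nonneg (by linarith), abs_of_nonneg (by linarith)]
    ring
  rcases h with ⟨hx, hy⟩ | ⟨hy, hx⟩
  · exact key hx hy
  · rw [add_comm, abs_sub_comm]
    exact key hy hx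

theorem abs_intCast_add_half_pos (x : ℤ) : 0 < |(x : ℝ) + 1 / 2| := by
  refine abs_pos.mpr fun h => ?_
  have h2 : 2 * x + 1 = 0 := by
    have : (2 * x + 1 : ℝ) = 0 := by linarith
    exact_mod_cast this
  omega

theorem summable_abs_intCast_add_half_rpow {p : ℝ} (hp : 1 < p) :
    Summable fun x : ℤ => |(x : ℝ) + 1 / 2| ^ (-p) := by
  refine ((Real.summable_one_div_int_add_rpow (1 / 2) p).mpr hp).congr fun x => ?_
  rw [Real.rpow_neg (abs_nonneg _), one_div]

theorem rpow_neg_add_le_mul {A B D p q : ℝ} (hA : 0 < A) (hB : 0 < B) (hAD : A ≤ D) (hBD : B ≤ D)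
    (hp : 0 ≤ p) (hq : 0 ≤ q) : D ^ (-(p + q)) ≤ A ^ (-p) * B ^ (-q) := by
  rw [neg_add, Real.rpow_add (hA.trans_le hAD)]
  exact mul_le_mul (Real.rpow_le_rpow_of_nonpos hA hAD (neg_nonpos.mpr hp))
    (Real.rpow_le_rpow_of_nonpos hB hBD (neg_nonpos.mpr hq))
    (Real.rpow_nonneg (hB.trans_le hBD).le _) (Real.rpow_nonneg hA.le _)

theorem rpow_neg_mul_rpow_neg_le {A B D ε p q : ℝ} (hA : 0 < A) (hB : 0 < B) (hAD : A ≤ D)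
    (hBD : B ≤ D) (hp : ε ≤ p) (hq : 0 ≤ q) :
    A ^ (-ε) * D ^ (-((p - ε) + q)) ≤ A ^ (-p) * B ^ (-q) :=
  calc A ^ (-ε) * D ^ (-((p - ε) + q)) ≤ A ^ (-ε) * (A ^ (-(p - ε)) * B ^ (-q)) := by
        gcongr
        exact rpow_neg_add_le_mul hA hB hAD hBD (sub_nonneg.mpr hp) hq
    _ = A ^ (-p) * B ^ (-q) := by
        rw [← mul_assoc, ← Real.rpow_add hA]
        ring_nf

theorem abs_transP_le (c γ : ℝ) (z : ℤ) : |transP c γ z| ≤ |c| * |(z : ℝ)| ^ (-γ - 1) := by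
  rw [transP]
  split_ifs
  · rw [abs_zero]
    positivity
  · rw [abs_mul, abs_of_nonneg (Real.rpow_nonneg (abs_nonneg _) _)]

theorem one_le_rpow_mul_abs_add_half_rpow_neg {R ε : ℝ} {n : ℕ} {x : ℤ} (hε : 0 ≤ ε) (hn : n ≠ 0)
    (hx : |(x : ℝ) / n| ≤ R) : 1 ≤ ((R + 1) * n) ^ ε * |(x : ℝ) + 1 / 2| ^ (-ε) := by
  have hn1 : (1 : ℝ) ≤ n := by exact_mod_cast Nat.one_le_iff_ne_zero.mpr hn
  have hA := abs_intCast_add_half_pos x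
  have hAn : |(x : ℝ) + 1 / 2| ≤ (R + 1) * n := by
    rw [abs_div, Nat.abs_cast, div_le_iff₀ (by linarith)] at hx
    have htri := abs_add_le (x : ℝ) (1 / 2)
    rw [abs_of_pos (one_half_pos : (0 : ℝ) < 1 / 2)] at htri
    linarith
  calc (1 : ℝ) = |(x : ℝ) + 1 / 2| ^ ε * |(x : ℝ) + 1 / 2| ^ (-ε) := by
        rw [← Real.rpow_add hA, add_neg_cancel, Real.rpow_zero]
    _ ≤ ((R + 1) * n) ^ ε * |(x : ℝ) + 1 / 2| ^ (-ε) := by gcongr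

theorem abs_sub_intCast_div_le {g : ℝ → ℝ} {C R δ : ℝ≥0} {ε : ℝ} (hg : HolderWith C δ g)
    (hR : ∀ u : ℝ, R ≤ |u| → g u = 0) (hε : 0 ≤ ε) {n : ℕ} (hn : n ≠ 0) (x y : ℤ) :
    |g ((y : ℝ) / n) - g ((x : ℝ) / n)| ≤ C * (|(y : ℝ) - x| / n) ^ (δ : ℝ) *
      (((R + 1) * n) ^ ε * (|(x : ℝ) + 1 / 2| ^ (-ε) + |(y : ℝ) + 1 / 2| ^ (-ε))) := by
  by_cases hxy : R ≤ |(x : ℝ) / n| ∧ R ≤ |(y : ℝ) / n|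
  · rw [hR _ hxy.1, hR _ hxy.2, sub_self, abs_zero]
    positivity
  have hone : 1 ≤ ((R + 1) * n) ^ ε *
      (|(x : ℝ) + 1 / 2| ^ (-ε) + |(y : ℝ) + 1 / 2| ^ (-ε)) := by
    rw [mul_add]
    rcases not_and_or.mp hxy with hx | hy
    · exact le_add_of_le_of_nonneg
        (one_le_rpow_mul_abs_add_half_rpow_neg hε hn (not_le.mp hx).le) (by positivity)
    · exact le_add_of_nonneg_of_le (by positivity)
        (one_le_rpow_mul_abs_add_half_rpow_neg hε hn (not_le.mp hy).le)
  have hholder : |g ((y : ℝ) / n) - g ((x : ℝ) / n)| ≤ C * (|(y : ℝ) - x| / n) ^ (δ : ℝ) := by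
    simpa only [Real.dist_eq, ← sub_div, abs_div, Nat.abs_cast] using hg.dist_le (y / n) (x / n)
  exact hholder.trans (le_mul_of_one_le_right (by positivity) hone)

theorem CrossesOrigin.abs_sub_mul_transP_le {g : ℝ → ℝ} {C R δ : ℝ≥0} {c γ ε η : ℝ}
    (hg : HolderWith C δ g) (hR : ∀ u : ℝ, R ≤ |u| → g u = 0) (hε : 0 ≤ ε)
    (hεη : ε ≤ 1 + η) (hδε : δ - ε = γ - 1 - 2 * η) {n : ℕ} (hn : n ≠ 0) {x y : ℤ}
    (h : CrossesOrigin x y) :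
    |(g ((y : ℝ) / n) - g ((x : ℝ) / n)) * transP c γ (y - x)| ≤
      2 * C * |c| * (R + 1) ^ ε * (n : ℝ) ^ (1 + 2 * η - γ) *
        (|(x : ℝ) + 1 / 2| ^ (-(1 + η)) * |(y : ℝ) + 1 / 2| ^ (-(1 + η))) := by
  have hn0 : (0 : ℝ) < n := by exact_mod_cast Nat.pos_of_ne_zero hn
  have hΔ := abs_sub_intCast_div_le hg hR hε hn x y
  have hp := abs_transP_le c γ (y - x)
  have hsum := h.abs_add_half_add_abs_add_half
  have hA := abs_intCast_add_half_pos x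
  have hB := abs_intCast_add_half_pos y
  rw [Int.cast_sub] at hp
  set A := |(x : ℝ) + 1 / 2|
  set B := |(y : ℝ) + 1 / 2|
  set D := |(y : ℝ) - x|
  have hD : 0 < D := by linarith
  have hγδ : (δ : ℝ) - γ - 1 = -((1 + η - ε) + (1 + η)) := by linarith
  have hAB : A ^ (-ε) * D ^ (δ - γ - 1) ≤ A ^ (-(1 + η)) * B ^ (-(1 + η)) :=
    hγδ ▸ rpow_neg_mul_rpow_neg_le hA hB (by linarith) (by linarith) hεη (by linarith)
  have hBA : B ^ (-ε) * D ^ (δ - γ - 1) ≤ B ^ (-(1 + η)) * A ^ (-(1 + η)) :=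
    hγδ ▸ rpow_neg_mul_rpow_neg_le hB hA (by linarith) (by linarith) hεη (by linarith)
  rw [abs_mul]
  calc _ ≤ C * (D / n) ^ (δ : ℝ) * (((R + 1) * n) ^ ε * (A ^ (-ε) + B ^ (-ε))) *
        (|c| * D ^ (-γ - 1)) := by gcongr
    _ = C * |c| * (R + 1) ^ ε * (n : ℝ) ^ (1 + 2 * η - γ) *
        (A ^ (-ε) * D ^ (δ - γ - 1) + B ^ (-ε) * D ^ (δ - γ - 1)) := by
      rw [Real.div_rpow hD.le hn0.le, Real.mul_rpow (by positivity) hn0.le,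
        show 1 + 2 * η - γ = ε - δ by linarith, Real.rpow_sub hn0,
        show (δ : ℝ) - γ - 1 = δ + (-γ - 1) by ring, Real.rpow_add hD]
      ring
    _ ≤ C * |c| * (R + 1) ^ ε * (n : ℝ) ^ (1 + 2 * η - γ) *
        (A ^ (-(1 + η)) * B ^ (-(1 + η)) + B ^ (-(1 + η)) * A ^ (-(1 + η))) := by gcongr
    _ = _ := by ring

theorem EquiLipschitzCompactSupport.exists_abs_sub_mul_transP_le {ι : Type*} {I : Set ι}
    {G : ι → ℝ → ℝ} (hG : EquiLipschitzCompactSupport I G) (c : ℝ) {γ η : ℝ} (hη : 0 < η)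
    (hηγ : η ≤ γ) (hγη : γ ≤ 2 + 2 * η) :
    ∃ M : ℝ, 0 ≤ M ∧ ∀ s ∈ I, ∀ n : ℕ, n ≠ 0 → ∀ x y : ℤ, CrossesOrigin x y →
      |(G s ((y : ℝ) / n) - G s ((x : ℝ) / n)) * transP c γ (y - x)| ≤
        M * (n : ℝ) ^ (1 + 2 * η - γ) *
          (|(x : ℝ) + 1 / 2| ^ (-(1 + η)) * |(y : ℝ) + 1 / 2| ^ (-(1 + η))) := by
  obtain ⟨⟨K, hK⟩, R, hR⟩ := hG
  set δ : ℝ≥0 := (γ - 1 - 2 * η).toNNReal with hδ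
  set ε : ℝ≥0 := (-(γ - 1 - 2 * η)).toNNReal with hε
  have hδ1 : δ ≤ 1 := Real.toNNReal_le_one.mpr (by linarith)
  have hεη : (ε : ℝ) ≤ 1 + η := max_le (by linarith) (by linarith)
  have hδε : (δ : ℝ) - ε = γ - 1 - 2 * η := by
    rw [hδ, hε, Real.coe_toNNReal', Real.coe_toNNReal', max_zero_sub_max_neg_zero_eq_self]
  exact ⟨_, by positivity, fun s hs n hn x y h => h.abs_sub_mul_transP_le
    (holderWith_of_lipschitzWith_of_eq_zero (hK s hs) (hR s hs) hδ1) (hR s hs)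
    ε.coe_nonneg hεη hδε hn⟩

theorem tsum_iSup_abs_tsum_le {ι α β : Type*} {I : Set ι} {F : ι → α → β → ℝ} {v : α → ℝ}
    {w : β → ℝ} (hv : Summable v) (hw : Summable w) (hv0 : ∀ x, 0 ≤ v x) (hw0 : ∀ y, 0 ≤ w y)
    (hF : ∀ s ∈ I, ∀ x y, |F s x y| ≤ v x * w y) :
    ∑' x, ⨆ s ∈ I, |∑' y, F s x y| ≤ (∑' x, v x) * ∑' y, w y := by
  have hinner : ∀ s ∈ I, ∀ x, |∑' y, F s x y| ≤ v x * ∑' y, w y := fun s hs x =>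
    tsum_of_norm_bounded (f := F s x) (hw.hasSum.mul_left (v x)) (hF s hs x)
  have hvw : ∀ x, 0 ≤ v x * ∑' y, w y := fun x => mul_nonneg (hv0 x) (tsum_nonneg hw0)
  refine (Real.le_norm_self _).trans (tsum_of_norm_bounded (hv.hasSum.mul_right _) fun x => ?_)
  rw [Real.norm_of_nonneg (Real.iSup_nonneg fun s => Real.iSup_nonneg fun _ => abs_nonneg _)]
  exact Real.iSup_le (fun s => Real.iSup_le (fun hs => hinner s hs x) (hvw x)) (hvw x)

theorem EquiLipschitzCompactSupport.exists_tsum_iSup_crossingSum_le {ι : Type*} {I : Set ι}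
    {G : ι → ℝ → ℝ} (hG : EquiLipschitzCompactSupport I G) (c β : ℝ) {γ η : ℝ} (hη : 0 < η)
    (hηγ : η ≤ γ) (hγη : γ ≤ 2 + 2 * η) :
    ∃ M : ℝ, ∀ n : ℕ, n ≠ 0 →
      (n : ℝ)⁻¹ * ∑' x : ℤ, ⨆ s ∈ I, |(n : ℝ) ^ (γ - β) * crossingSum c γ (G s) n x| ≤
        M * (n : ℝ) ^ (-(β - 2 * η)) := by
  obtain ⟨M, hM, hterm⟩ := hG.exists_abs_sub_mul_transP_le c hη hηγ hγη
  set w : ℤ → ℝ := fun x => |(x : ℝ) + 1 / 2| ^ (-(1 + η))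
  have hws : Summable w := summable_abs_intCast_add_half_rpow (by linarith)
  have hw0 : ∀ x, 0 ≤ w x := fun x => by positivity
  refine ⟨M * (∑' x, w x) * ∑' y, w y, fun n hn => ?_⟩
  have hn0 : (0 : ℝ) < n := by exact_mod_cast Nat.pos_of_ne_zero hn
  set P : ℝ := (n : ℝ) ^ (γ - β) * (M * (n : ℝ) ^ (1 + 2 * η - γ)) with hP
  have hP0 : 0 ≤ P := by positivity
  have hsum : ∑' x : ℤ, ⨆ s ∈ I, |(n : ℝ) ^ (γ - β) * crossingSum c γ (G s) n x| ≤
      (∑' x, P * w x) * ∑' y, w y := by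
    simp only [crossingSum, ← tsum_mul_left (a := (n : ℝ) ^ (γ - β))]
    refine tsum_iSup_abs_tsum_le (hws.mul_left P) hws (fun x => mul_nonneg hP0 (hw0 x)) hw0
      fun s hs x y => ?_
    split_ifs with h
    · rw [abs_mul, abs_of_nonneg (by positivity), hP, mul_assoc, mul_assoc]
      gcongr
      exact hterm s hs n hn x y h
    · rw [mul_zero, abs_zero]
      exact mul_nonneg (mul_nonneg hP0 (hw0 x)) (hw0 y)
  calc _ ≤ (n : ℝ)⁻¹ * ((∑' x, P * w x) * ∑' y, w y) := by gcongr
    _ = _ := by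
      rw [tsum_mul_left, hP, show -(β - 2 * η) = -1 + (γ - β) + (1 + 2 * η - γ) by ring,
        Real.rpow_add hn0, Real.rpow_add hn0, Real.rpow_neg_one]
      ring

theorem stmt15_general {ι : Type*} {I : Set ι} {G : ι → ℝ → ℝ} {γ β : ℝ} (c : ℝ) (hγ : 0 < γ)
    (hβ : 0 < β) (hγβ : γ < 2 + β) (hG : EquiLipschitzCompactSupport I G) :
    Tendsto (fun n : ℕ => (n : ℝ)⁻¹ * ∑' x : ℤ,
        ⨆ s ∈ I, |(n : ℝ) ^ (γ - β) * crossingSum c γ (G s) n x|)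
      atTop (𝓝 0) := by
  obtain ⟨η, hη_gt, hη_lt⟩ : ∃ η, max 0 ((γ - 2) / 2) < η ∧ η < min γ (β / 2) :=
    exists_between (max_lt (lt_min hγ (by linarith)) (lt_min (by linarith) (by linarith)))
  obtain ⟨hη, hγη⟩ := max_lt_iff.mp hη_gt
  obtain ⟨hηγ, hηβ⟩ := lt_min_iff.mp hη_lt
  obtain ⟨M, hM⟩ :=
    hG.exists_tsum_iSup_crossingSum_le c β hη hηγ.le (by linarith : γ ≤ 2 + 2 * η)
  have hlim : Tendsto (fun n : ℕ => M * (n : ℝ) ^ (-(β - 2 * η))) atTop (𝓝 0) := by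
    simpa using ((tendsto_rpow_neg_atTop (by linarith : 0 < β - 2 * η)).comp
      tendsto_natCast_atTop_atTop).const_mul M
  refine squeeze_zero' (.of_forall fun n => ?_) ((eventually_ne_atTop 0).mono hM) hlim
  exact mul_nonneg (by positivity) (tsum_nonneg fun x =>
    Real.iSup_nonneg fun s => Real.iSup_nonneg fun _ => abs_nonneg _)

theorem stmt15 (γ c T β : ℝ) (hγ : γ ∈ Set.Ioo (0 : ℝ) 2) (hc : 0 < c)
    (hprob : HasSum (transP c γ) 1) (hT : 0 < T) (hβ : 0 < β)
    (G : ℝ → ℝ → ℝ)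
    -- if γ ∈ (0,1] then G ∈ S_Neu; if γ ∈ (1,2) then G ∈ S_Rob with G₋(t,0) = G₊(t,0),
    -- i.e. G(t,·) is (left-)continuous at the origin
    (hG : (γ ≤ 1 ∧ SNeuMem G) ∨
      (1 < γ ∧ SRobMem G ∧
        ∀ t ∈ Set.Icc (0 : ℝ) T, Tendsto (fun u => G t u) (𝓝[<] (0 : ℝ)) (𝓝 (G t 0)))) :
    Tendsto (fun n : ℕ => (n : ℝ)⁻¹ * ∑' x : ℤ,
        ⨆ s ∈ Set.Icc (0 : ℝ) T,
          |(n : ℝ) ^ (γ - β) * ∑' y : ℤ,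
            (if (x < 0 ∧ 0 ≤ y) ∨ (y < 0 ∧ 0 ≤ x) then
              (G s ((y : ℝ) / n) - G s ((x : ℝ) / n)) * transP c γ (y - x) else 0)|)
      atTop (𝓝 0) := by
  have hI := Metric.isBounded_Icc 0 T
  exact stmt15_general c hγ.1 hβ (by linarith [hγ.2]) <| hG.elim
    (fun h => h.2.sDifMem.equiLipschitzCompactSupport hI)
    (fun h => h.2.1.equiLipschitzCompactSupport hI h.2.2)
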